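/- arXiv:0908.1159 — 2 statements merged into one kernel-verified Lean document; each statement's English description precedes it below -/
import Mathlib

section
/- BB(3) = 6: among all Turing machines with at most 3 states (in the model without a separate halting state) that halt on the all-zero tape, the maximum number of 1s in the computed word is exactly 6. -/
/-- Head movement directions. -/
inductive Dir : Type
  | left | stay | right

/-- Displacement of the head for each direction. -/
def Dir.move : Dir → ℤ
  | .left => -1
  | .stay => 0
  | .right => 1

/-- A configuration of a Turing machine with state type `Q`: current state,
head position and the two-way infinite binary tape. -/
structure Cfg (Q : Type) where
  state : Q
  head : ℤ
  tape : ℤ → Bool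

/-- One step of the machine with partial transition function `f`
(`none` if the machine halts, i.e. `f` is undefined on the current pair). -/
def stepTM {Q : Type} (f : Q × Bool → Option (Q × Bool × Dir)) (c : Cfg Q) :
    Option (Cfg Q) :=
  (f (c.state, c.tape c.head)).map fun qbd =>
    ⟨qbd.1, c.head + qbd.2.2.move, Function.update c.tape c.head qbd.2.1⟩

/-- Running `t` steps (returns `none` if the machine halts strictly before `t` steps). -/
def stepsTM {Q : Type} (f : Q × Bool → Option (Q × Bool × Dir)) :
    ℕ → Cfg Q → Option (Cfg Q)
  | 0, c => some c
  | t + 1, c => (stepTM f c).bind (stepsTM f t)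

/-- Initial configuration: initial state `q0`, head at `0`, all-zero tape. -/
def initCfg {Q : Type} (q0 : Q) : Cfg Q := ⟨q0, 0, fun _ => false⟩

/-- The machine is halted in configuration `c`: the transition function is
undefined on the current (state, symbol) pair. -/
def Halted {Q : Type} (f : Q × Bool → Option (Q × Bool × Dir)) (c : Cfg Q) : Prop :=
  f (c.state, c.tape c.head) = none

/-- `w` is the tape contents from the leftmost 1 to the rightmost 1
(the empty word if the tape contains no 1). -/
def TapeWord (tape : ℤ → Bool) (w : List Bool) : Prop :=
  ∃ i : ℤ,
    (∀ k : ℕ, k < w.length → w.getD k false = tape (i + k)) ∧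
    (∀ j : ℤ, tape j = true → i ≤ j ∧ j < i + w.length) ∧
    (w ≠ [] → w.getD 0 false = true ∧ w.getLastD false = true)

/-- The machine with transition function `f` and initial state `q0`, started on
the all-zero tape, halts after exactly `t` steps computing the word `w`. -/
def Computes {Q : Type} (f : Q × Bool → Option (Q × Bool × Dir)) (q0 : Q)
    (w : List Bool) (t : ℕ) : Prop :=
  ∃ c : Cfg Q, stepsTM f t (initCfg q0) = some c ∧ Halted f c ∧ TapeWord c.tape w

/-!
Stay moves can be contracted, so a machine may be assumed to move its head at every step; only the
scanned cell can still change when it halts. Blank cells left blank do not change the tape, so the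
interesting part of a run begins when the first one is written, and by reflection and renaming of
states this happens in state `0`, moving right, on the way into state `0` or `1`.

From there all machines are enumerated by filling in an entry of the table only when the run needs
it. Runs that halt are checked directly. Of every other run it is shown that it never halts: the two
half-tapes are read by a small finite automaton, which turns configurations into finitely many
symbolic ones, and a set of symbolic configurations is found that is closed under the machine and
contains no halting configuration.
-/

namespace BusyBeaver

/-! ### Machines that always move -/

/-- The action of a machine that moves its head at every step: the next state, the symbol written,
and whether the head moves right (otherwise it moves left). -/
structure Rule (Q : Type) where
  next : Q
  write : Bool
  toRight : Bool

/-- A Turing machine without stay moves, possibly only partially specified; it halts where its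
table has no entry. -/
abbrev Machine (Q : Type) := Q → Bool → Option (Rule Q)

/-- A tape with finitely many ones, seen from the head. Each half-tape is the natural number whose
binary digits, least significant first, are the cells read away from the head. -/
structure Tape where
  left : ℕ
  head : Bool
  right : ℕ

/-- The tape all of whose cells hold `0`. -/
def Tape.blank : Tape := ⟨0, false, 0⟩

/-- Write `w` under the head, then move the head one cell, to the right if the flag is `true`. -/
def Tape.move (t : Tape) (w : Bool) : Bool → Tape
  | true => ⟨Nat.bit w t.left, t.right.testBit 0, t.right / 2⟩
  | false => ⟨t.left / 2, t.left.testBit 0, Nat.bit w t.right⟩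

/-- The number of ones outside the scanned cell. -/
def Tape.sideOnes (t : Tape) : ℕ := t.left.bitIndices.length + t.right.bitIndices.length

/-- The tape reflected at the head. -/
def Tape.mirror (t : Tape) : Tape := ⟨t.right, t.head, t.left⟩

theorem Tape.mirror_move (t : Tape) (w d : Bool) : (t.move w d).mirror = t.mirror.move w (!d) := by
  cases d <;> rfl

theorem Tape.sideOnes_mirror (t : Tape) : t.mirror.sideOnes = t.sideOnes :=
  Nat.add_comm _ _

theorem Tape.blank_move_false (d : Bool) : Tape.blank.move false d = Tape.blank := by
  cases d <;> rfl

/-- `HaltsWith g q t n`: started in state `q` on the tape `t`, the machine `g` halts with `n` ones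
outside the scanned cell. The scanned cell is left out because a machine with stay moves may still
change it after its last proper move. -/
inductive HaltsWith {Q : Type} (g : Machine Q) : Q → Tape → ℕ → Prop
  | halt {q : Q} {t : Tape} : g q t.head = none → HaltsWith g q t t.sideOnes
  | step {q : Q} {t : Tape} {r : Rule Q} {n : ℕ} : g q t.head = some r →
      HaltsWith g r.next (t.move r.write r.toRight) n → HaltsWith g q t n

section Machine

variable {P Q : Type} {g G : Machine Q} {q : Q} {s : Bool} {r : Rule Q} {t : Tape} {n : ℕ}

theorem HaltsWith.exists_eq_none (h : HaltsWith g q t n) : ∃ q s, g q s = none := by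
  induction h with
  | halt hnone => exact ⟨_, _, hnone⟩
  | step _ _ ih => exact ih

theorem HaltsWith.of_eq_none (h : HaltsWith g q t n) (hnone : g q t.head = none) :
    n = t.sideOnes := by
  cases h with
  | halt _ => rfl
  | step hsome _ => simp [hnone] at hsome

theorem HaltsWith.of_eq_some (h : HaltsWith g q t n) (hsome : g q t.head = some r) :
    HaltsWith g r.next (t.move r.write r.toRight) n := by
  cases h with
  | halt hnone => simp [hnone] at hsome
  | step hsome' hrest => exact Option.some.inj (hsome'.symm.trans hsome) ▸ hrest

theorem HaltsWith.congr_head {q' : Q} {s s' : Bool} {l k : ℕ} (h : HaltsWith g q ⟨l, s, k⟩ n)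
    (hg : g q' s' = g q s) : HaltsWith g q' ⟨l, s', k⟩ n := by
  cases h with
  | halt hnone => exact .halt (t := ⟨l, s', k⟩) (hg.trans hnone)
  | @step _ _ r _ hsome hrest =>
    refine .step (t := ⟨l, s', k⟩) (hg.trans hsome) ?_
    cases r with | mk p w d => cases d <;> exact hrest

/-- The machine with left and right exchanged. -/
def Machine.mirror (g : Machine Q) : Machine Q :=
  fun q s => (g q s).map fun r => ⟨r.next, r.write, !r.toRight⟩

theorem HaltsWith.mirror (h : HaltsWith g q t n) : HaltsWith g.mirror q t.mirror n := by
  induction h with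
  | halt hnone =>
    rw [← Tape.sideOnes_mirror]
    exact .halt (congrArg (Option.map _) hnone)
  | step hsome _ ih => exact .step (congrArg (Option.map _) hsome) (Tape.mirror_move .. ▸ ih)

/-- The machine with its states renamed along a bijection. -/
def Machine.rename (e : Q ≃ P) (g : Machine Q) : Machine P :=
  fun p s => (g (e.symm p) s).map fun r => ⟨e r.next, r.write, r.toRight⟩

theorem Machine.rename_apply (e : Q ≃ P) (g : Machine Q) (q : Q) (s : Bool) :
    g.rename e (e q) s = (g q s).map fun r => ⟨e r.next, r.write, r.toRight⟩ := by
  simp only [rename, Equiv.symm_apply_apply]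

theorem HaltsWith.rename (e : Q ≃ P) (h : HaltsWith g q t n) :
    HaltsWith (g.rename e) (e q) t n := by
  induction h with
  | halt hnone => exact .halt (by rw [g.rename_apply, hnone, Option.map_none])
  | step hsome _ ih => exact .step (by rw [g.rename_apply, hsome, Option.map_some]) ih

/-- `G.Extends g`: the table of `G` agrees with every entry that is already present in `g`. -/
def Machine.Extends (G g : Machine Q) : Prop :=
  ∀ ⦃q s r⦄, g q s = some r → G q s = some r

/-- The machine `g` with the entry for state `q` and symbol `s` set to `r`. -/
def Machine.define [DecidableEq Q] (g : Machine Q) (q : Q) (s : Bool) (r : Rule Q) : Machine Q :=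
  fun q' s' => if q' = q then if s' = s then some r else g q' s' else g q' s'

theorem Machine.Extends.define [DecidableEq Q] (h : G.Extends g) (hr : G q s = some r) :
    G.Extends (g.define q s r) := by
  intro q' s' r' h'
  unfold Machine.define at h'
  split_ifs at h' with hq hs
  · rw [hq, hs, hr, h']
  · exact h h'
  · exact h h'

end Machine

/-! ### Forced evaluation -/

/-- `force n k = k n`. The kernel evaluates call by name; recursion on `n` makes it reduce `n` to a
numeral before continuing with `k`, so that large terms are not evaluated over and over. -/
def force {β : Type} (n : ℕ) (k : ℕ → β) : β := Nat.rec (k 0) (fun m _ => k (m + 1)) n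

@[simp]
theorem force_eq {β : Type} (n : ℕ) (k : ℕ → β) : force n k = k n := by
  cases n <;> rfl

/-- `t.force k = k t`, with every component of `t` evaluated first; see `BusyBeaver.force`. -/
def Tape.force {β : Type} (t : Tape) (k : Tape → β) : β :=
  BusyBeaver.force t.left fun l => BusyBeaver.force t.right fun r =>
    match t.head with
    | true => k ⟨l, true, r⟩
    | false => k ⟨l, false, r⟩

@[simp]
theorem Tape.force_eq {β : Type} (t : Tape) (k : Tape → β) : t.force k = k t := by
  rcases t with ⟨l, _ | _, r⟩ <;> simp [Tape.force]

/-! ### Certificates of non-halting -/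

/-- A deterministic automaton with states in `ℕ` that reads a half-tape towards the head. Its
transition from the state `a` along the symbol `x` is coded by the number `Nat.bit x a = 2 * a + x`,
and `step` maps the code of a transition to its target. In the state `0` it has seen only blanks. -/
structure Reader where
  step : ℕ → ℕ
  step_zero : step 0 = 0

/-- A symbolic configuration: the states reached by an automaton on the left and on the right
half-tape, the state of the machine, and the scanned symbol. -/
abbrev Node (Q : Type) := ℕ × ℕ × Q × Bool

/-- A finite description of a set of configurations: the symbolic configurations allowed, and the
coded transitions which the automaton may use on the left and on the right half-tape. -/
structure Cover (Q : Type) where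
  nodes : List (Node Q)
  left : List ℕ
  right : List ℕ

/-- `Reads ρ E L a`: the automaton `ρ` reaches the state `a` on the half-tape `L`, where beyond the
initial loop on blanks it only uses transitions from `E`. -/
inductive Reads (ρ : Reader) (E : List ℕ) : ℕ → ℕ → Prop
  | blank : Reads ρ E 0 0
  | push {L a : ℕ} {x : Bool} : Reads ρ E L a → Nat.bit x a ∈ E →
      Reads ρ E (Nat.bit x L) (ρ.step (Nat.bit x a))

section Reader

variable {ρ : Reader} {E F : List ℕ} {L a : ℕ}

theorem Reads.mono (hEF : E ⊆ F) (h : Reads ρ E L a) : Reads ρ F L a := by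
  induction h with
  | blank => exact .blank
  | push _ hmem ih => exact .push ih (hEF hmem)

theorem Reads.exists_transition (h : Reads ρ E L a) :
    ∃ e ∈ 0 :: E, ρ.step e = a ∧ e.testBit 0 = L.testBit 0 ∧ Reads ρ E (L / 2) (e / 2) := by
  cases h with
  | blank => exact ⟨0, List.mem_cons_self, ρ.step_zero, rfl, .blank⟩
  | @push L a x h hmem =>
    refine ⟨Nat.bit x a, List.mem_cons_of_mem _ hmem, rfl, ?_, ?_⟩
    · rw [Nat.testBit_bit_zero, Nat.testBit_bit_zero]
    · rwa [Nat.bit_div_two, Nat.bit_div_two]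

variable (ρ)

/-- The state reached by the automaton on the half-tape `L`, with the transitions used on the way;
the first argument bounds the number of digits of `L`. -/
def Reader.run : ℕ → ℕ → ℕ × List ℕ
  | 0, _ => (0, [])
  | n + 1, L =>
    match Reader.run n (L / 2) with
    | (a, E) => force (Nat.bit (L.testBit 0) a) fun e => (ρ.step e, e :: E)

theorem Reader.reads_run {n L : ℕ} (hL : L < 2 ^ n) : Reads ρ (ρ.run n L).2 L (ρ.run n L).1 := by
  induction n generalizing L with
  | zero =>
    obtain rfl : L = 0 := by omega
    exact .blank
  | succ n ih =>
    have hhalf : L / 2 < 2 ^ n := by omega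
    have hbit : Nat.bit (L.testBit 0) (L / 2) = L := by
      rw [← Nat.shiftRight_one, Nat.bit_testBit_zero_shiftRight_one]
    simp only [Reader.run, force_eq]
    simpa only [hbit] using
      ((ih hhalf).mono (List.subset_cons_self _ _)).push (x := L.testBit 0) List.mem_cons_self

end Reader

section Cover

variable {Q : Type} (ρ : Reader) {C D : Cover Q} {g G : Machine Q} {q : Q} {t : Tape} {n : ℕ}

/-- `C.Covers ρ q t`: the configuration with state `q` and tape `t` is among those described
by `C`. -/
def Cover.Covers (C : Cover Q) (q : Q) (t : Tape) : Prop :=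
  ∃ a b, Reads ρ C.left t.left a ∧ Reads ρ C.right t.right b ∧ (a, b, q, t.head) ∈ C.nodes

/-- What has to be in a cover for it to be preserved by the rule `r` at the node `v`: the transition
over the written symbol and, for each admissible transition `f` over the symbol that comes under the
head, the node with the source `f / 2` of `f`. -/
def Cover.succ (C : Cover Q) (v : Node Q) (r : Rule Q) : Cover Q :=
  match v, r with
  | (a, b, _), ⟨p, w, true⟩ =>
    force (Nat.bit w a) fun e => force (ρ.step e) fun a' =>
      ⟨((0 :: C.right).filter fun f => ρ.step f == b).map fun f => (a', f / 2, p, f.testBit 0),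
        [e], []⟩
  | (a, b, _), ⟨p, w, false⟩ =>
    force (Nat.bit w b) fun e => force (ρ.step e) fun b' =>
      ⟨((0 :: C.left).filter fun f => ρ.step f == a).map fun f => (f / 2, b', p, f.testBit 0),
        [], [e]⟩

/-- Inclusion of covers. -/
def Cover.Subset (C D : Cover Q) : Prop :=
  C.nodes ⊆ D.nodes ∧ C.left ⊆ D.left ∧ C.right ⊆ D.right

/-- A cover is closed under `g` if `g` never halts on a configuration it describes and always leads
to another one. -/
def Cover.Closed (C : Cover Q) (g : Machine Q) : Prop :=
  ∀ v ∈ C.nodes, ∃ r, g v.2.2.1 v.2.2.2 = some r ∧ (C.succ ρ v r).Subset C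

variable {ρ}

theorem Cover.Subset.refl (C : Cover Q) : C.Subset C :=
  ⟨List.Subset.refl _, List.Subset.refl _, List.Subset.refl _⟩

theorem Cover.Subset.trans {C D E : Cover Q} (hCD : C.Subset D) (hDE : D.Subset E) : C.Subset E :=
  ⟨List.Subset.trans hCD.1 hDE.1, List.Subset.trans hCD.2.1 hDE.2.1,
    List.Subset.trans hCD.2.2 hDE.2.2⟩

theorem Cover.Covers.mono (h : C.Covers ρ q t) (hCD : C.Subset D) : D.Covers ρ q t := by
  obtain ⟨a, b, hleft, hright, hmem⟩ := h
  exact ⟨a, b, hleft.mono hCD.2.1, hright.mono hCD.2.2, hCD.1 hmem⟩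

theorem Reads.covers_move {a b : ℕ} (hleft : Reads ρ C.left t.left a)
    (hright : Reads ρ C.right t.right b) (r : Rule Q)
    (hsub : (C.succ ρ (a, b, q, t.head) r).Subset C) :
    C.Covers ρ r.next (t.move r.write r.toRight) := by
  obtain ⟨p, w, _ | _⟩ := r <;> simp only [Cover.succ, force_eq] at hsub <;>
    obtain ⟨hnodes, hl, hr⟩ := hsub
  · obtain ⟨f, hf, hstep, hbit, hrest⟩ := hleft.exists_transition
    refine ⟨f / 2, _, hrest, hright.push (hr List.mem_cons_self), hnodes ?_⟩
    refine List.mem_map.2 ⟨f, List.mem_filter.2 ⟨hf, beq_iff_eq.2 hstep⟩, ?_⟩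
    rw [hbit, Tape.move]
  · obtain ⟨f, hf, hstep, hbit, hrest⟩ := hright.exists_transition
    refine ⟨_, f / 2, hleft.push (hl List.mem_cons_self), hrest, hnodes ?_⟩
    refine List.mem_map.2 ⟨f, List.mem_filter.2 ⟨hf, beq_iff_eq.2 hstep⟩, ?_⟩
    rw [hbit, Tape.move]

theorem Cover.Closed.not_haltsWith (hC : C.Closed ρ g) (hcov : C.Covers ρ q t) :
    ¬ HaltsWith g q t n := by
  intro h
  induction h with
  | halt hnone =>
    obtain ⟨a, b, -, -, hmem⟩ := hcov
    obtain ⟨r, hr, -⟩ := hC _ hmem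
    exact Option.some_ne_none r (hr.symm.trans hnone)
  | step hsome _ ih =>
    obtain ⟨a, b, hleft, hright, hmem⟩ := hcov
    obtain ⟨r, hr, hsub⟩ := hC _ hmem
    obtain rfl := Option.some.inj (hr.symm.trans hsome)
    exact ih (hleft.covers_move hright r hsub)

theorem Cover.Closed.of_extends (hC : C.Closed ρ g) (hG : G.Extends g) : C.Closed ρ G := by
  intro v hv
  obtain ⟨r, hr, hsub⟩ := hC v hv
  exact ⟨r, hG hr, hsub⟩

variable [DecidableEq Q]

/-- The Boolean form of `Cover.Subset`. -/
def Cover.isSubset (C D : Cover Q) : Bool :=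
  C.left.all D.left.contains && C.right.all D.right.contains && C.nodes.all D.nodes.contains

theorem Cover.subset_of_isSubset (h : C.isSubset D) : C.Subset D := by
  simp only [isSubset, Bool.and_eq_true, List.all_eq_true, List.contains_iff_mem] at h
  exact ⟨h.2, h.1.1, h.1.2⟩

/-- The componentwise union of two covers. -/
def Cover.union (C D : Cover Q) : Cover Q :=
  ⟨C.nodes ∪ D.nodes, C.left ∪ D.left, C.right ∪ D.right⟩

theorem Cover.subset_union_right (C D : Cover Q) : D.Subset (C.union D) := by
  refine ⟨?_, ?_, ?_⟩ <;> exact fun x hx => List.mem_union_iff.2 (Or.inr hx)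

variable (ρ)

/-- Whether fewer than `n` repairs turn the cover into a closed one, where a repair adds the
successors of the first node at which the cover fails to be closed. -/
def saturates (g : Machine Q) : ℕ → Cover Q → Bool
  | 0, _ => false
  | n + 1, C =>
    match C.nodes.find? fun v =>
      (g v.2.2.1 v.2.2.2).all fun r => !(C.succ ρ v r).isSubset C with
    | none => true
    | some v => (g v.2.2.1 v.2.2.2).any fun r => saturates g n ((C.succ ρ v r).union C)

variable {ρ}

theorem exists_closed_of_saturates {k : ℕ} (h : saturates ρ g k C) :
    ∃ D, C.Subset D ∧ D.Closed ρ g := by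
  induction k generalizing C with
  | zero => exact absurd h Bool.false_ne_true
  | succ k ih =>
    unfold saturates at h
    split at h
    next hfind =>
      refine ⟨C, .refl C, fun v hv => ?_⟩
      have hv := List.find?_eq_none.1 hfind v hv
      simp only [Option.all_eq_true, Bool.not_eq_true', not_forall, Bool.not_eq_false] at hv
      obtain ⟨r, hr, hsub⟩ := hv
      exact ⟨r, hr, Cover.subset_of_isSubset hsub⟩
    next v _ =>
      obtain ⟨r, -, hr⟩ := (Option.any_eq_true _ _).1 h
      obtain ⟨D, hD, hclosed⟩ := ih hr
      exact ⟨D, (Cover.subset_union_right _ C).trans hD, hclosed⟩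

variable (ρ)

/-- Whether the automaton `ρ` yields, after fewer than `50` repairs, a closed cover containing the
given configuration. -/
def Reader.certifies (g : Machine Q) (q : Q) (t : Tape) : Bool :=
  match ρ.run (t.left.log2 + 1) t.left, ρ.run (t.right.log2 + 1) t.right with
  | (a, E), (b, F) =>
    force a fun a => force b fun b => saturates ρ g 50 ⟨[(a, b, q, t.head)], E, F⟩

variable {ρ}

theorem not_haltsWith_of_certifies (h : ρ.certifies g q t) (hG : G.Extends g) :
    ¬ HaltsWith G q t n := by
  simp only [Reader.certifies, force_eq] at h
  obtain ⟨D, hsub, hclosed⟩ := exists_closed_of_saturates h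
  refine (hclosed.of_extends hG).not_haltsWith (Cover.Covers.mono ?_ hsub)
  exact ⟨_, _, ρ.reads_run Nat.lt_log2_self, ρ.reads_run Nat.lt_log2_self,
    List.mem_singleton_self _⟩

end Cover

/-- The automaton that remembers the `n` cells nearest to the head. -/
def Reader.window (n : ℕ) : Reader := ⟨fun e => e % 2 ^ n, Nat.zero_mod _⟩

/-- An automaton with four states, found by computer search: it certifies the few three-state
machines on which short windows fail. -/
def Reader.quaternary : Reader := ⟨fun e => [0, 1, 2, 3, 1, 3, 2, 1].getD e 0, rfl⟩

/-- The automata used to certify that three-state machines do not halt, tried in this order. -/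
def readers : List Reader := [.window 1, .window 2, .quaternary, .window 3]

/-! ### The search tree -/

section Search

variable {Q : Type} [DecidableEq Q] [Fintype Q] {ρs : List Reader} {m : ℕ}
  {g G : Machine Q} {q : Q} {t : Tape} {k n : ℕ}

/-- A depth-first search through all extensions of the partial machine `g`, simulated from the state
`q` and the tape `t` for `k` more steps: whenever a missing entry is reached, all its values are
tried, except that the last missing entry must stay undefined in a machine that halts. It
succeeds if the branches that halt leave at most `m` ones outside the scanned cell and one of the
automata certifies each machine still running at the end. -/
def search (ρs : List Reader) (m : ℕ) : ℕ → Machine Q → Q → Tape → Bool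
  | 0, g, q, t => ρs.any fun ρ => ρ.certifies g q t
  | k + 1, g, q, t =>
    match g q t.head with
    | some ⟨p, w, d⟩ => (t.move w d).force fun t' => search ρs m k g p t'
    | none => decide (t.sideOnes ≤ m) &&
        (decide (∀ p s, (p, s) ≠ (q, t.head) → (g p s).isSome) ||
          decide (∀ p w d, ((t.move w d).force fun t' =>
            search ρs m k (g.define q t.head ⟨p, w, d⟩) p t') = true))

theorem HaltsWith.le_of_search (hn : HaltsWith G q t n) (hG : G.Extends g)
    (h : search ρs m k g q t) : n ≤ m := by
  induction k generalizing g q t with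
  | zero =>
    obtain ⟨ρ, -, hρ⟩ := List.any_eq_true.1 h
    exact absurd hn (not_haltsWith_of_certifies hρ hG)
  | succ k ih =>
    unfold search at h
    split at h
    next p w d hsome =>
      rw [Tape.force_eq] at h
      exact ih (hn.of_eq_some (hG hsome)) hG h
    next =>
      simp only [Bool.and_eq_true, Bool.or_eq_true, decide_eq_true_eq, Tape.force_eq] at h
      obtain ⟨hones, hsearch⟩ := h
      cases hr : G q t.head with
      | none => exact (hn.of_eq_none hr).trans_le hones
      | some r =>
        rcases hsearch with hlast | hbranch
        · obtain ⟨p, s, hps⟩ := hn.exists_eq_none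
          have hne : (p, s) ≠ (q, t.head) := by
            rintro ⟨⟩
            exact Option.some_ne_none r (hr.symm.trans hps)
          obtain ⟨r', hr'⟩ := Option.isSome_iff_exists.1 (hlast p s hne)
          exact absurd ((hG hr').symm.trans hps) (Option.some_ne_none r')
        · exact ih (hn.of_eq_some hr) (hG.define hr) (hbranch r.next r.write r.toRight)

end Search

/-! ### Three states -/

/-- The partial machine that on a blank cell in state `0` writes a one, moves right and enters
state `p`. -/
def start (p : Fin 3) : Machine (Fin 3) :=
  Machine.define (fun _ _ => none) 0 false ⟨p, true, true⟩

-- A halting three-state machine makes at most 20 moves; noticing that it has halted costs one more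
-- unit of depth.
theorem search_start_zero : search readers 5 21 (start 0) 0 .blank := by
  decide +kernel

theorem search_start_one : search readers 5 21 (start 1) 0 .blank := by
  decide +kernel

section ThreeStates

variable {g : Machine (Fin 3)} {q p : Fin 3} {n : ℕ}

theorem HaltsWith.le_five_of_write_right (h : HaltsWith g q .blank n)
    (hsome : g q false = some ⟨p, true, true⟩) : n ≤ 5 := by
  obtain ⟨e, heq, hep⟩ : ∃ e : Equiv.Perm (Fin 3), e q = 0 ∧ (e p = 0 ∨ e p = 1) := by
    clear h hsome
    revert q p
    decide
  have hext : (g.rename e).Extends (start (e p)) := by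
    refine Machine.Extends.define (fun _ _ _ => nofun) ?_
    rw [← heq, g.rename_apply, hsome, Option.map_some]
  have hrename : HaltsWith (g.rename e) 0 .blank n := heq ▸ h.rename e
  rcases hep with hp | hp <;> rw [hp] at hext
  · exact hrename.le_of_search hext search_start_zero
  · exact hrename.le_of_search hext search_start_one

theorem HaltsWith.le_five (h : HaltsWith g q .blank n) : n ≤ 5 := by
  generalize ht : Tape.blank = t at h
  induction h with
  | halt _ => subst ht; exact Nat.zero_le 5
  | @step q t r n hsome hrest ih =>
    subst ht
    have h : HaltsWith g q .blank n := .step hsome hrest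
    obtain ⟨p, _ | _, _ | _⟩ := r
    · exact ih rfl
    · exact ih rfl
    · exact h.mirror.le_five_of_write_right (p := p) (congrArg (Option.map _) hsome)
    · exact h.le_five_of_write_right hsome

end ThreeStates

/-! ### Elimination of stay moves -/

/-- `Leads f q s r`: scanning `s` in state `q`, the machine `f` makes finitely many stay moves and
then a proper move, with the same effect as the single action `r`. -/
inductive Leads {Q : Type} (f : Q × Bool → Option (Q × Bool × Dir)) : Q → Bool → Rule Q → Prop
  | left {q p : Q} {s w : Bool} : f (q, s) = some (p, w, .left) → Leads f q s ⟨p, w, false⟩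
  | right {q p : Q} {s w : Bool} : f (q, s) = some (p, w, .right) → Leads f q s ⟨p, w, true⟩
  | stay {q p : Q} {s w : Bool} {r : Rule Q} :
      f (q, s) = some (p, w, .stay) → Leads f p w r → Leads f q s r

section StayFree

variable {Q : Type} {f : Q × Bool → Option (Q × Bool × Dir)} {q p : Q} {s w : Bool} {r : Rule Q}

theorem Leads.unique {r' : Rule Q} (h : Leads f q s r) (h' : Leads f q s r') : r = r' := by
  induction h with
  | left hf => cases h' <;> simp_all
  | right hf => cases h' <;> simp_all
  | stay hf _ ih =>
    cases h' with
    | left hf' => simp [hf] at hf'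
    | right hf' => simp [hf] at hf'
    | stay hf' h' =>
      obtain ⟨rfl, rfl, -⟩ : _ ∧ _ ∧ True := by simpa [hf] using hf'
      exact ih h'

theorem leads_iff_of_stay (hf : f (q, s) = some (p, w, .stay)) : Leads f q s r ↔ Leads f p w r := by
  refine ⟨fun h => ?_, .stay hf⟩
  cases h <;> simp_all

open Classical in
/-- The machine without stay moves that behaves like `f`. It has no entry where `f` halts after
finitely many stay moves or makes stay moves forever. -/
noncomputable def stayFree (f : Q × Bool → Option (Q × Bool × Dir)) : Machine Q :=
  fun q s => if h : ∃ r, Leads f q s r then some h.choose else none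

theorem stayFree_eq_some_iff : stayFree f q s = some r ↔ Leads f q s r := by
  unfold stayFree
  split_ifs with h
  · rw [Option.some_inj]
    exact ⟨fun hr => hr ▸ h.choose_spec, h.choose_spec.unique⟩
  · exact ⟨nofun, fun hr => (h ⟨r, hr⟩).elim⟩

theorem stayFree_eq_none (hf : f (q, s) = none) : stayFree f q s = none := by
  refine Option.eq_none_iff_forall_ne_some.2 fun r hr => ?_
  cases stayFree_eq_some_iff.1 hr <;> simp_all

theorem stayFree_eq_of_stay (hf : f (q, s) = some (p, w, .stay)) :
    stayFree f q s = stayFree f p w :=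
  Option.ext fun _ => by rw [stayFree_eq_some_iff, stayFree_eq_some_iff, leads_iff_of_stay hf]

end StayFree

/-! ### Tapes indexed by the integers -/

/-- The content of the cell at a given displacement from the head. -/
def Tape.cell (t : Tape) : ℤ → Bool
  | .ofNat 0 => t.head
  | .ofNat (k + 1) => t.right.testBit k
  | .negSucc k => t.left.testBit k

theorem Tape.cell_blank (i : ℤ) : Tape.blank.cell i = false := by
  rcases i with (_ | _) | _ <;> simp [cell, blank]

theorem Tape.cell_set_head (t : Tape) (w : Bool) (i : ℤ) :
    Tape.cell ⟨t.left, w, t.right⟩ i = Function.update t.cell 0 w i := by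
  rcases i with (_ | k) | k
  · rfl
  · exact (Function.update_of_ne (Int.ofNat_ne_zero.2 k.succ_ne_zero) w t.cell).symm
  · exact (Function.update_of_ne (Int.negSucc_ne_zero k) w t.cell).symm

theorem Tape.cell_move_right (t : Tape) (w : Bool) (i : ℤ) :
    (t.move w true).cell i = Function.update t.cell 0 w (i + 1) := by
  rcases i with (_ | k) | _ | k
  · rfl
  · exact (Nat.testBit_add_one t.right k).symm
  · exact Nat.testBit_bit_zero w t.left
  · exact Nat.testBit_bit_succ k w t.left

theorem Tape.cell_move_left (t : Tape) (w : Bool) (i : ℤ) :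
    (t.move w false).cell i = Function.update t.cell 0 w (i + -1) := by
  rcases i with (_ | _ | k) | k
  · rfl
  · exact Nat.testBit_bit_zero w t.right
  · have hpred : Int.ofNat (k + 2) + -1 = Int.ofNat (k + 1) := by grind
    rw [hpred]
    exact Nat.testBit_bit_succ k w t.right
  · exact (Nat.testBit_add_one t.left k).symm

/-- A finite set of displacements containing those of all ones; it always includes the head. -/
def Tape.support (t : Tape) : Finset ℤ :=
  insert 0 (t.right.bitIndices.toFinset.image (fun k : ℕ => (k + 1 : ℤ)) ∪
    t.left.bitIndices.toFinset.image Int.negSucc)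

theorem Tape.mem_support (t : Tape) {i : ℤ} (h : t.cell i = true) : i ∈ t.support := by
  rcases i with (_ | k) | k <;> simp_all [cell, support, Nat.mem_bitIndices]

theorem Tape.card_support_le (t : Tape) : t.support.card ≤ t.sideOnes + 1 := by
  refine (Finset.card_insert_le _ _).trans (Nat.succ_le_succ ?_)
  refine (Finset.card_union_le _ _).trans ?_
  rw [sideOnes, Nat.add_comm]
  exact add_le_add (Finset.card_image_le.trans (List.toFinset_card_le _))
    (Finset.card_image_le.trans (List.toFinset_card_le _))

theorem count_true_le_card {w : List Bool} {i : ℤ} {S : Finset ℤ}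
    (h : ∀ k < w.length, w.getD k false = true → i + k ∈ S) : w.count true ≤ S.card := by
  induction w generalizing i S with
  | nil => exact Nat.zero_le _
  | cons b w ih =>
    have htail : ∀ k < w.length, w.getD k false = true → i + 1 + k ∈ S.erase i := by
      intro k hk hw
      refine Finset.mem_erase.2 ⟨by omega, ?_⟩
      have hmem := h (k + 1) (Nat.succ_lt_succ hk) hw
      rwa [Nat.cast_succ, add_comm (k : ℤ), ← add_assoc] at hmem
    cases b with
    | false =>
      rw [List.count_cons_of_ne (by decide)]
      exact (ih htail).trans (Finset.card_le_card (Finset.erase_subset i S))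
    | true =>
      have hi : i ∈ S := by simpa using h 0 (Nat.zero_lt_succ _) rfl
      rw [List.count_cons_self, ← Finset.card_erase_add_one hi]
      exact Nat.succ_le_succ (ih htail)

section Bridge

variable {Q : Type} {f : Q × Bool → Option (Q × Bool × Dir)} {c c' : Cfg Q} {t : Tape}

/-- The configuration `c` has the tape `t` as seen from its head. -/
def Represents (t : Tape) (c : Cfg Q) : Prop :=
  ∀ j, c.tape j = t.cell (j - c.head)

theorem Represents.tape_head (h : Represents t c) : c.tape c.head = t.head := by
  rw [h, sub_self]
  rfl

theorem Represents.step {t' : Tape} {w : Bool} {δ : ℤ} (h : Represents t c) (q : Q)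
    (ht' : ∀ i, t'.cell i = Function.update t.cell 0 w (i + δ)) :
    Represents t' ⟨q, c.head + δ, Function.update c.tape c.head w⟩ := by
  intro j
  have hshift : j - (c.head + δ) + δ = j - c.head := by ring
  simp only [ht', hshift, Function.update_apply, h j, sub_eq_zero]

theorem Represents.count_le (h : Represents t c) {w : List Bool} (hw : TapeWord c.tape w) :
    w.count true ≤ t.sideOnes + 1 := by
  obtain ⟨i, hcells, -, -⟩ := hw
  refine (count_true_le_card (i := i - c.head) fun k hk hwk => t.mem_support ?_).trans
    t.card_support_le
  rw [sub_add_eq_add_sub, ← h, ← hcells k hk, hwk]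

theorem Represents.exists_haltsWith {k : ℕ} {w : List Bool} (h : Represents t c)
    (hsteps : stepsTM f k c = some c') (hhalt : Halted f c') (hw : TapeWord c'.tape w) :
    ∃ n, HaltsWith (stayFree f) c.state t n ∧ w.count true ≤ n + 1 := by
  induction k generalizing c t with
  | zero =>
    obtain rfl : c = c' := Option.some.inj hsteps
    refine ⟨_, .halt (stayFree_eq_none ?_), h.count_le hw⟩
    rw [← h.tape_head]
    exact hhalt
  | succ k ih =>
    obtain ⟨c₁, hstep, hrest⟩ := Option.bind_eq_some_iff.1 hsteps
    obtain ⟨⟨p, b, d⟩, hf, rfl⟩ := Option.map_eq_some_iff.1 hstep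
    rw [h.tape_head] at hf
    cases d with
    | left =>
      obtain ⟨n, hn, hcount⟩ := ih (h.step p (t.cell_move_left b)) hrest
      exact ⟨n, .step (stayFree_eq_some_iff.2 (.left hf)) hn, hcount⟩
    | right =>
      obtain ⟨n, hn, hcount⟩ := ih (h.step p (t.cell_move_right b)) hrest
      exact ⟨n, .step (stayFree_eq_some_iff.2 (.right hf)) hn, hcount⟩
    | stay =>
      have hset : Represents ⟨t.left, b, t.right⟩ ⟨p, c.head + 0, _⟩ :=
        h.step p fun i => by rw [add_zero, t.cell_set_head b]
      obtain ⟨n, hn, hcount⟩ := ih hset hrest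
      exact ⟨n, hn.congr_head (stayFree_eq_of_stay hf), hcount⟩

end Bridge

/-! ### The champion -/

/-- A three-state machine attaining the maximum. -/
def champion : Fin 3 × Bool → Option (Fin 3 × Bool × Dir)
  | (0, false) => some (1, true, .right)
  | (0, true) => none
  | (1, false) => some (2, false, .right)
  | (1, true) => some (1, true, .right)
  | (2, false) => some (2, true, .left)
  | (2, true) => some (0, true, .left)

theorem champion_computes : Computes champion 0 (List.replicate 6 true) 13 := by
  refine ⟨_, rfl, rfl, -1, ?_, ?_, ?_⟩
  · decide
  · intro j hj
    simp only [initCfg, Fin.isValue, Dir.move, zero_add, Int.reduceAdd, Int.reduceNeg,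
      add_neg_cancel, neg_add_cancel, Function.update_apply, Bool.if_false_right, Bool.and_true,
      Bool.if_false_left, Bool.if_true_left, Bool.or_eq_true, decide_eq_true_eq, Bool.and_eq_true,
      Bool.not_eq_eq_eq_not, Bool.not_true, decide_eq_false_iff_not] at hj
    rw [List.length_replicate]
    omega
  · intro _
    exact ⟨rfl, rfl⟩

theorem count_le_six_of_computes {f : Fin 3 × Bool → Option (Fin 3 × Bool × Dir)} {q : Fin 3}
    {w : List Bool} {t : ℕ} (h : Computes f q w t) : w.count true ≤ 6 := by
  obtain ⟨c, hsteps, hhalt, hw⟩ := h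
  have hblank : Represents .blank (initCfg q) := fun _ => (Tape.cell_blank _).symm
  obtain ⟨n, hn, hcount⟩ := hblank.exists_haltsWith hsteps hhalt hw
  exact hcount.trans (Nat.succ_le_succ hn.le_five)

end BusyBeaver

/-- BB(3) = 6: among all Turing machines with at most 3 states
(in the model without a separate halting state) that halt on the all-zero
tape, the maximum number of 1s in the computed word is exactly 6. -/
theorem busy_beaver_3 :
    IsGreatest
      {m : ℕ |
        ∃ (f : Fin 3 × Bool → Option (Fin 3 × Bool × Dir)) (w : List Bool) (t : ℕ),
          Computes f 0 w t ∧ w.count true = m} 6 := by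
  constructor
  · exact ⟨BusyBeaver.champion, _, 13, BusyBeaver.champion_computes, rfl⟩
  · rintro _ ⟨f, w, t, hcomp, rfl⟩
    exact BusyBeaver.count_le_six_of_computes hcomp
end

section
/- Card(M_BB(3)) = 44: there are exactly 44 Turing machines with at most 3 states (in the model without a separate halting state) that halt on the all-zero tape with a computed word containing exactly BB(3) = 6 ones. -/
/-!
A machine that executes a stay move leading to another defined entry can be shortened: replacing
the former entry by the latter preserves the result. By induction on the halting time, it
therefore arises from a machine already found. All other machines must move left or right as long
as the tape cannot carry six ones. Up to interchanging left and right and interchanging the states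
`1` and `2`, they first move to the right, into state `0` or `1`. They are enumerated by running
partially known machines from the blank tape and fixing each entry when it is first needed. The
last entry must remain undefined, since a total machine does not halt.

A branch that runs for too long never halts. To prove this, each half tape is abstracted to an
element of a finite set. Whenever the head moves off a cell, the state, the abstractions of both
half tapes and the cell left behind are recorded. The cells that it enters when moving the other
way are among those recorded, so finitely many abstract contexts account for the whole
computation, and it remains to see that none of them needs an undefined entry.
-/

instance : DecidableEq Dir
  | .left, .left | .stay, .stay | .right, .right => isTrue rfl
  | .left, .stay | .left, .right | .stay, .left | .stay, .right | .right, .left | .right, .stay =>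
    isFalse nofun

/-- A Turing machine with state set `Q`, given by its partial transition function. -/
abbrev Machine (Q : Type) := Q × Bool → Option (Q × Bool × Dir)

variable {Q : Type}

/-- A configuration with finite half tapes, both listed outward from the head; the cells beyond
them are blank, and the position of the head is forgotten. Computations are run on these. -/
structure ListCfg (Q : Type) where
  state : Q
  left : List Bool
  symbol : Bool
  right : List Bool

namespace ListCfg

/-- The state `q₀` on the blank tape. -/
def start (q₀ : Q) : ListCfg Q := ⟨q₀, [], false, []⟩

/-- The argument of the transition function. -/
def scanned (c : ListCfg Q) : Q × Bool := (c.state, c.symbol)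

/-- The configuration after executing the instruction `(new state, written symbol, direction)`. -/
def apply : ListCfg Q → Q × Bool × Dir → ListCfg Q
  | ⟨_, l, _, r⟩, (q, w, .left) => ⟨q, l.tail, l.headD false, w :: r⟩
  | ⟨_, l, _, r⟩, (q, w, .stay) => ⟨q, l, w, r⟩
  | ⟨_, l, _, r⟩, (q, w, .right) => ⟨q, w :: l, r.headD false, r.tail⟩

/-- The number of ones on the tape. -/
def ones (c : ListCfg Q) : ℕ := c.left.count true + c.symbol.toNat + c.right.count true

/-- The symbol at displacement `i` from the head. -/
def cell (c : ListCfg Q) : ℤ → Bool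
  | .ofNat 0 => c.symbol
  | .ofNat (n + 1) => c.right.getD n false
  | .negSucc n => c.left.getD n false

/-- The configuration of the two-way infinite tape with head at position `h`. -/
def toCfg (c : ListCfg Q) (h : ℤ) : Cfg Q := ⟨c.state, h, fun j => c.cell (j - h)⟩

end ListCfg

open ListCfg

/-- From the configuration `c`, the machine `M` halts after exactly `n` steps, leaving `k` ones. -/
def HaltsWith (M : Machine Q) (k : ℕ) : ℕ → ListCfg Q → Prop
  | 0, c => M c.scanned = none ∧ c.ones = k
  | n + 1, c => ∃ e ∈ M c.scanned, HaltsWith M k n (c.apply e)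

instance HaltsWith.decidable (M : Machine Q) (k : ℕ) : ∀ n c, Decidable (HaltsWith M k n c)
  | 0, c => inferInstanceAs (Decidable (M c.scanned = none ∧ c.ones = k))
  | n + 1, c =>
    have (e : Q × Bool × Dir) : Decidable (HaltsWith M k n (c.apply e)) := decidable M k n _
    inferInstanceAs (Decidable (∃ e ∈ M c.scanned, HaltsWith M k n (c.apply e)))

section Tape

theorem encard_setOf_getD_eq_count (l : List Bool) :
    {n : ℕ | l.getD n false = true}.encard = l.count true := by
  induction l with
  | nil => simp
  | cons b l ih =>
    have split : {n : ℕ | (b :: l).getD n false = true} =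
        {n | n = 0 ∧ b = true} ∪ Nat.succ '' {n | l.getD n false = true} := by
      ext (_ | n) <;> simp
    rw [split, Set.encard_union_eq (by simp [Set.disjoint_left]),
      Nat.succ_injective.encard_image, ih]
    cases b <;> simp [add_comm]

namespace ListCfg

@[simp]
theorem cell_zero (c : ListCfg Q) : c.cell 0 = c.symbol := rfl

@[simp]
theorem cell_add_one (c : ListCfg Q) (n : ℕ) : c.cell (n + 1) = c.right.getD n false := rfl

theorem cell_one (c : ListCfg Q) : c.cell 1 = c.right.getD 0 false := rfl

theorem cell_add_two (c : ListCfg Q) (n : ℕ) :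
    c.cell (n + 1 + 1) = c.right.getD (n + 1) false := rfl

theorem cell_neg_one (c : ListCfg Q) : c.cell (-1) = c.left.getD 0 false := rfl

@[simp]
theorem cell_negSucc (c : ListCfg Q) (n : ℕ) : c.cell (.negSucc n) = c.left.getD n false := rfl

theorem cell_apply (c : ListCfg Q) (e : Q × Bool × Dir) (i : ℤ) :
    (c.apply e).cell i = if i + e.2.2.move = 0 then e.2.1 else c.cell (i + e.2.2.move) := by
  have add_one_ne (n : ℕ) : (n + 1 : ℤ) ≠ 0 := by omega
  have add_two_ne (n : ℕ) : (n + 1 + 1 : ℤ) ≠ 0 := by omega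
  have negSucc_sub_one (n : ℕ) : Int.negSucc n + -1 = .negSucc (n + 1) := rfl
  have negSucc_add_one (n : ℕ) : Int.negSucc (n + 1) + 1 = .negSucc n := rfl
  obtain ⟨q, l, a, r⟩ := c
  obtain ⟨q', w, _ | _ | _⟩ := e
  · obtain (_ | _ | n) | n := i <;>
      simp [apply, Dir.move, cell_one, cell_add_two, cell_neg_one, add_one_ne, negSucc_sub_one,
        List.head?_eq_getElem?]
  · obtain (_ | n) | n := i <;> simp [apply, Dir.move, add_one_ne]
  · obtain (_ | n) | _ | n := i <;>
      simp [apply, Dir.move, cell_one, cell_add_two, cell_neg_one, add_two_ne, negSucc_add_one,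
        List.head?_eq_getElem?]

theorem encard_cell (c : ListCfg Q) : {i : ℤ | c.cell i = true}.encard = c.ones := by
  have add_one_ne_zero (n : ℕ) : (n + 1 : ℤ) ≠ 0 := by omega
  have add_one_ne_negSucc (m n : ℕ) : (m + 1 : ℤ) ≠ .negSucc n := by omega
  have split : {i : ℤ | c.cell i = true} =
      Int.negSucc '' {n | c.left.getD n false = true} ∪ {i | i = 0 ∧ c.symbol = true} ∪
        (fun n : ℕ => (n + 1 : ℤ)) '' {n | c.right.getD n false = true} := by
    ext i
    obtain (_ | n) | n := i
    · simp [add_one_ne_zero]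
    · simp [add_one_ne_zero, (add_one_ne_negSucc _ _).symm]
    · simp [add_one_ne_negSucc]
  have hsymbol : {i : ℤ | i = 0 ∧ c.symbol = true}.encard = c.symbol.toNat := by
    cases c.symbol <;> simp
  rw [split, Set.encard_union_eq, Set.encard_union_eq,
    Function.Injective.encard_image (fun a b => by simp),
    Function.Injective.encard_image (fun a b => by simp), encard_setOf_getD_eq_count,
    encard_setOf_getD_eq_count, hsymbol, ones]
  · push_cast
    rfl
  · simp [Set.disjoint_left]
  · rw [Set.disjoint_left]
    rintro _ (⟨m, -, rfl⟩ | ⟨rfl, -⟩) ⟨n, -, h⟩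
    exacts [add_one_ne_negSucc n m h, add_one_ne_zero n h]

end ListCfg

theorem TapeWord.encard_eq {tape : ℤ → Bool} {w : List Bool} (h : TapeWord tape w) :
    {j | tape j = true}.encard = w.count true := by
  obtain ⟨i, hw, hsupp, -⟩ := h
  have image : {j | tape j = true} = (fun n : ℕ => i + n) '' {n | w.getD n false = true} := by
    ext j
    constructor
    · intro hj
      obtain ⟨n, rfl⟩ := Int.le.dest (hsupp j hj).1
      exact ⟨n, (hw n (by grind)).trans hj, rfl⟩
    · rintro ⟨n, hn : w.getD n false = true, rfl⟩
      have : n < w.length := by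
        by_contra! hlen
        simp [hlen] at hn
      simpa [← hw n this] using hn
  rw [image, Function.Injective.encard_image (fun a b => by simp), encard_setOf_getD_eq_count]

theorem exists_tapeWord {tape : ℤ → Bool} (h : {j | tape j = true}.Finite) :
    ∃ w, TapeWord tape w := by
  obtain hempty | hne := {j | tape j = true}.eq_empty_or_nonempty
  · exact ⟨[], 0, by simp_all [Set.eq_empty_iff_forall_notMem]⟩
  obtain ⟨first, hfirst : tape first = true, hmin⟩ := Set.exists_min_image _ id h hne
  obtain ⟨last, hlast : tape last = true, hmax⟩ := Set.exists_max_image _ id h hne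
  obtain ⟨n, (rfl : first + (n : ℤ) = last)⟩ := Int.le.dest (hmin last hlast)
  refine ⟨(List.range (n + 1)).map fun k : ℕ => tape (first + k), first, fun k hk => ?_,
    fun j hj => ⟨hmin j hj, ?_⟩, ?_⟩
  · simp_all
  · have : j ≤ first + n := hmax j hj
    simpa using by omega
  · exact fun _ => ⟨by simp [hfirst], by simp [hlast, List.range_succ]⟩

end Tape

section Bridge

theorem ListCfg.encard_toCfg_tape (c : ListCfg Q) (h : ℤ) :
    {j | (c.toCfg h).tape j = true}.encard = c.ones := by
  rw [← c.encard_cell]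
  exact Set.encard_preimage_of_bijective (Equiv.subRight h).bijective {i | c.cell i = true}

theorem ListCfg.toCfg_start (q₀ : Q) : (start q₀).toCfg 0 = initCfg q₀ := by
  have cell_start : (start q₀).cell = fun _ => false := by
    ext ((_ | n) | n) <;> rfl
  simp only [toCfg, cell_start]
  rfl

theorem stepTM_toCfg (M : Machine Q) (c : ListCfg Q) (h : ℤ) :
    stepTM M (c.toCfg h) = (M c.scanned).map fun e => (c.apply e).toCfg (h + e.2.2.move) := by
  have step_eq (e : Q × Bool × Dir) : (c.apply e).toCfg (h + e.2.2.move) =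
      ⟨e.1, h + e.2.2.move, Function.update (c.toCfg h).tape h e.2.1⟩ := by
    have state_eq : (c.apply e).state = e.1 := by
      obtain ⟨q, w, _ | _ | _⟩ := e <;> rfl
    simp only [toCfg, state_eq, cell_apply, Cfg.mk.injEq, true_and]
    ext j
    simp [Function.update_apply, ← sub_sub, sub_eq_zero]
  simp only [stepTM, step_eq]
  simp [toCfg, scanned]

theorem haltsWith_iff_stepsTM {M : Machine Q} {k n : ℕ} {c : ListCfg Q} {h : ℤ} :
    HaltsWith M k n c ↔ ∃ γ, stepsTM M n (c.toCfg h) = some γ ∧ Halted M γ ∧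
      {j | γ.tape j = true}.encard = k := by
  induction n generalizing c h with
  | zero =>
    have halted_iff : Halted M (c.toCfg h) ↔ M c.scanned = none := by
      simp [Halted, toCfg, scanned]
    simp [stepsTM, HaltsWith, halted_iff, encard_toCfg_tape]
  | succ n ih =>
    rw [stepsTM, stepTM_toCfg]
    cases he : M c.scanned with
    | none => simp [HaltsWith, he]
    | some e => simp [HaltsWith, he, ← ih]

theorem exists_computes_iff_exists_haltsWith {M : Machine Q} {q₀ : Q} {k : ℕ} :
    (∃ w t, Computes M q₀ w t ∧ w.count true = k) ↔ ∃ n, HaltsWith M k n (start q₀) := by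
  constructor
  · rintro ⟨w, t, ⟨γ, hγ, hhalt, hw⟩, rfl⟩
    exact ⟨t, haltsWith_iff_stepsTM.2 ⟨γ, toCfg_start q₀ ▸ hγ, hhalt, hw.encard_eq⟩⟩
  · rintro ⟨t, ht⟩
    obtain ⟨γ, hγ, hhalt, hones⟩ := haltsWith_iff_stepsTM.1 ht
    obtain ⟨w, hw⟩ := exists_tapeWord (Set.finite_of_encard_eq_coe hones)
    exact ⟨w, t, ⟨γ, toCfg_start q₀ ▸ hγ, hhalt, hw⟩, by simpa [hw.encard_eq] using hones⟩

end Bridge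

section Dynamics

/-- `Step M c c'`: the machine `M` moves from the configuration `c` to `c'` in one step. -/
def Step (M : Machine Q) (c c' : ListCfg Q) : Prop := ∃ e ∈ M c.scanned, c.apply e = c'

/-- The reflexive transitive closure of `Step`. -/
abbrev Reaches (M : Machine Q) : ListCfg Q → ListCfg Q → Prop := Relation.ReflTransGen (Step M)

theorem HaltsWith.exists_lt_apply {M : Machine Q} {k n : ℕ} {c : ListCfg Q} {e : Q × Bool × Dir}
    (h : HaltsWith M k n c) (he : e ∈ M c.scanned) : ∃ m < n, HaltsWith M k m (c.apply e) := by
  cases n with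
  | zero => simp_all [HaltsWith]
  | succ n =>
    obtain ⟨e', he', h⟩ := h
    obtain rfl := Option.mem_unique he he'
    exact ⟨n, n.lt_succ_self, h⟩

theorem HaltsWith.ones_eq {M : Machine Q} {k n : ℕ} {c : ListCfg Q}
    (h : HaltsWith M k n c) (hnone : M c.scanned = none) : c.ones = k := by
  cases n with
  | zero => exact h.2
  | succ n => simp_all [HaltsWith]

theorem HaltsWith.exists_of_reaches {M : Machine Q} {k n : ℕ} {c c' : ListCfg Q}
    (h : HaltsWith M k n c') (hreach : Reaches M c c') : ∃ m, HaltsWith M k m c := by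
  induction hreach using Relation.ReflTransGen.head_induction_on with
  | refl => exact ⟨n, h⟩
  | head hstep _ ih =>
    obtain ⟨m, hm⟩ := ih
    obtain ⟨e, he, rfl⟩ := hstep
    exact ⟨m + 1, e, he, hm⟩

theorem not_haltsWith_of_invariant {M : Machine Q} {Inv : ListCfg Q → Prop}
    (hInv : ∀ c, Inv c → ∃ e ∈ M c.scanned, Inv (c.apply e)) {c : ListCfg Q} (hc : Inv c)
    (k n : ℕ) : ¬HaltsWith M k n c := by
  induction n generalizing c with
  | zero =>
    obtain ⟨e, he, -⟩ := hInv c hc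
    simp_all [HaltsWith]
  | succ n ih =>
    intro h
    obtain ⟨e, he, hc'⟩ := hInv c hc
    obtain ⟨e', he', h⟩ := h
    exact ih hc' (Option.mem_unique he he' ▸ h)

end Dynamics

section Symmetry

theorem HaltsWith.map {Q' : Type} {M : Machine Q} {M' : Machine Q'}
    {φ : ListCfg Q → ListCfg Q'} {ψ : Q × Bool × Dir → Q' × Bool × Dir}
    (hscanned : ∀ c, M' (φ c).scanned = (M c.scanned).map ψ)
    (happly : ∀ c e, (φ c).apply (ψ e) = φ (c.apply e)) (hones : ∀ c, (φ c).ones = c.ones)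
    {k n : ℕ} {c : ListCfg Q} (h : HaltsWith M k n c) : HaltsWith M' k n (φ c) := by
  induction n generalizing c with
  | zero => simpa [HaltsWith, hscanned, hones] using h
  | succ n ih =>
    obtain ⟨e, he, h⟩ := h
    exact ⟨ψ e, by simp_all, happly c e ▸ ih h⟩

/-- The opposite direction. -/
def Dir.flip : Dir → Dir
  | left => right
  | stay => stay
  | right => left

/-- The mirror image of a machine, with left and right interchanged. -/
def Machine.mirror (M : Machine Q) : Machine Q :=
  fun p => (M p).map fun e => (e.1, e.2.1, e.2.2.flip)

theorem HaltsWith.mirror {M : Machine Q} {k n : ℕ} {q₀ : Q} (h : HaltsWith M k n (start q₀)) :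
    HaltsWith M.mirror k n (start q₀) := by
  refine HaltsWith.map (φ := fun c => ⟨c.state, c.right, c.symbol, c.left⟩) (fun c => rfl) ?_ ?_ h
  · rintro c ⟨q, w, _ | _ | _⟩ <;> rfl
  · intro c
    simp only [ones]
    omega

theorem Machine.mirror_mirror (M : Machine Q) : M.mirror.mirror = M := by
  have flip_flip (d : Dir) : d.flip.flip = d := by cases d <;> rfl
  ext1 p
  simp [mirror, flip_flip, Function.comp_def]

/-- The machine `M` with its states renamed along `σ`. -/
def Machine.relabel {Q' : Type} (M : Machine Q) (σ : Q ≃ Q') : Machine Q' :=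
  fun p => (M (σ.symm p.1, p.2)).map fun e => (σ e.1, e.2)

theorem Machine.relabel_symm_relabel {Q' : Type} (M : Machine Q) (σ : Q ≃ Q') :
    (M.relabel σ).relabel σ.symm = M := by
  ext1 p
  simp [relabel, Function.comp_def]

theorem HaltsWith.relabel {Q' : Type} {M : Machine Q} {k n : ℕ} {q₀ : Q}
    (h : HaltsWith M k n (start q₀)) (σ : Q ≃ Q') :
    HaltsWith (M.relabel σ) k n (start (σ q₀)) := by
  refine HaltsWith.map (φ := fun c => ⟨σ c.state, c.left, c.symbol, c.right⟩)
    (ψ := fun e => (σ e.1, e.2)) ?_ ?_ ?_ h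
  · simp [scanned, Machine.relabel]
  · rintro c ⟨q, w, _ | _ | _⟩ <;> rfl
  · exact fun c => rfl

end Symmetry

section StayElimination

theorem ListCfg.apply_stay_apply (c : ListCfg Q) (q : Q) (w : Bool) (e : Q × Bool × Dir) :
    (c.apply (q, w, .stay)).apply e = c.apply e := by
  obtain ⟨q', w', _ | _ | _⟩ := e <;> rfl

variable [DecidableEq Q] {M : Machine Q} {p p' : Q × Bool} {e : Q × Bool × Dir} {k : ℕ}

theorem HaltsWith.exists_le_update (hp : M p = some (p'.1, p'.2, .stay)) (hp' : M p' = some e)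
    {n : ℕ} {c : ListCfg Q} (h : HaltsWith M k n c) :
    ∃ m ≤ n, HaltsWith (Function.update M p (some e)) k m c ∧ (c.scanned = p → m < n) := by
  induction n using Nat.strong_induction_on generalizing c with | _ n ih
  by_cases hc : c.scanned = p
  · obtain ⟨n₁, hn₁, h⟩ := h.exists_lt_apply (hc ▸ hp)
    obtain ⟨n₂, hn₂, h⟩ := h.exists_lt_apply hp'
    rw [apply_stay_apply] at h
    obtain ⟨m, hm, h, -⟩ := ih n₂ (by omega) h
    exact ⟨m + 1, by omega, ⟨e, by simp [hc], h⟩, by omega⟩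
  · cases n with
    | zero => exact ⟨0, le_rfl, by simp_all [HaltsWith]⟩
    | succ n =>
      obtain ⟨e', he', h⟩ := h
      obtain ⟨m, hmn, h, -⟩ := ih n n.lt_succ_self h
      exact ⟨m + 1, by omega, ⟨e', by simp_all, h⟩, by simp [hc]⟩

theorem HaltsWith.exists_lt_update (hp : M p = some (p'.1, p'.2, .stay)) (hp' : M p' = some e)
    {c c' : ListCfg Q} (hreach : Reaches M c c') (hc' : c'.scanned = p) {n : ℕ}
    (h : HaltsWith M k n c) : ∃ m < n, HaltsWith (Function.update M p (some e)) k m c := by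
  induction hreach using Relation.ReflTransGen.head_induction_on generalizing n with
  | refl =>
    obtain ⟨m, -, hm, hlt⟩ := h.exists_le_update hp hp'
    exact ⟨m, hlt hc', hm⟩
  | @head c _ hstep _ ih =>
    by_cases hc : c.scanned = p
    · obtain ⟨m, -, hm, hlt⟩ := h.exists_le_update hp hp'
      exact ⟨m, hlt hc, hm⟩
    · obtain ⟨e', he', rfl⟩ := hstep
      obtain ⟨n', hn', h⟩ := h.exists_lt_apply he'
      obtain ⟨m, hm, h⟩ := ih h
      exact ⟨m + 1, by omega, e', by simp_all, h⟩

end StayElimination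

/-- `Extends T M`: the machine `M` agrees with the partially known machine `T` wherever `T` is
defined. -/
def Extends (T M : Machine Q) : Prop := ∀ p, ∀ e ∈ T p, e ∈ M p

namespace Abstraction

variable {σ : Type}

/-- A cell of a half tape together with the abstraction `below` of the cells beyond it. -/
@[ext]
structure Deposit (σ : Type) where
  below : σ
  symbol : Bool

instance [DecidableEq σ] : DecidableEq (Deposit σ) :=
  fun _ _ => decidable_of_iff' _ Deposit.ext_iff

/-- The head about to enter a half tape with abstraction `ahead`, in the given state, the half tape
on its other side having the abstraction `behind`. -/
@[ext]
structure Mover (Q σ : Type) where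
  ahead : σ
  behind : σ
  state : Q

instance [DecidableEq Q] [DecidableEq σ] : DecidableEq (Mover Q σ) :=
  fun _ _ => decidable_of_iff' _ Mover.ext_iff

/-- What has been recorded of the moves in one direction: the moving heads and the cells that they
have left behind. -/
structure Side (Q σ : Type) where
  movers : List (Mover Q σ)
  deposits : List (Deposit σ)

/-- A configuration with its half tapes replaced by their abstractions. -/
structure Context (Q σ : Type) where
  state : Q
  symbol : Bool
  left : σ
  right : σ

/-- The mirror image of a context. -/
def Context.swap (c : Context Q σ) : Context Q σ := ⟨c.state, c.symbol, c.right, c.left⟩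

namespace Side

/-- Sides are ordered by inclusion of what has been recorded. -/
instance : LE (Side Q σ) := ⟨fun S S' => S.movers ⊆ S'.movers ∧ S.deposits ⊆ S'.deposits⟩

instance : Preorder (Side Q σ) where
  le_refl _ := ⟨List.Subset.refl _, List.Subset.refl _⟩
  le_trans _ _ _ h h' := ⟨List.Subset.trans h.1 h'.1, List.Subset.trans h.2 h'.2⟩

variable [DecidableEq Q] [DecidableEq σ]

/-- The side `S` with a mover and the cell that it leaves behind added. -/
def record (S : Side Q σ) (m : Mover Q σ) (f : Deposit σ) : Side Q σ :=
  ⟨S.movers.insert m, S.deposits.insert f⟩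

theorem le_record (S : Side Q σ) (m : Mover Q σ) (f : Deposit σ) : S ≤ S.record m f :=
  ⟨fun _ => List.mem_insert_of_mem, fun _ => List.mem_insert_of_mem⟩

end Side

section Explore

variable (push : σ → Bool → σ)

/-- The partial machine `T` moves the head in the context `c`, and the move is recorded. -/
def Covered (T : Machine Q) (R L : Side Q σ) (c : Context Q σ) : Prop :=
  ∃ q w, (T (c.state, c.symbol) = some (q, w, .right) ∧
      ⟨c.right, push c.left w, q⟩ ∈ R.movers ∧ ⟨c.left, w⟩ ∈ R.deposits) ∨
    (T (c.state, c.symbol) = some (q, w, .left) ∧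
      ⟨c.left, push c.right w, q⟩ ∈ L.movers ∧ ⟨c.right, w⟩ ∈ L.deposits)

variable {push}

theorem Covered.mono {T : Machine Q} {R R' L L' : Side Q σ} {c : Context Q σ}
    (h : Covered push T R L c) (hR : R ≤ R') (hL : L ≤ L') : Covered push T R' L' c := by
  obtain ⟨q, w, ⟨hT, hm, hf⟩ | ⟨hT, hm, hf⟩⟩ := h
  · exact ⟨q, w, .inl ⟨hT, hR.1 hm, hR.2 hf⟩⟩
  · exact ⟨q, w, .inr ⟨hT, hL.1 hm, hL.2 hf⟩⟩

variable [DecidableEq σ]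

variable (push) in
/-- The context in which a right-moving head scans the cell `f`, provided that `f` can be the first
cell of the half tape being entered. -/
def meet (m : Mover Q σ) (f : Deposit σ) : Option (Context Q σ) :=
  if push f.below f.symbol = m.ahead then some ⟨m.state, f.symbol, m.behind, f.below⟩ else none

variable (push) in
/-- The contexts that can arise from the right moves recorded in `R` and the left moves recorded
in `L`. -/
def Pending (R L : Side Q σ) (c : Context Q σ) : Prop :=
  (∃ m ∈ R.movers, ∃ f ∈ L.deposits, meet push m f = some c) ∨
    ∃ m ∈ L.movers, ∃ f ∈ R.deposits, meet push m f = some c.swap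

theorem pending_swap {R L : Side Q σ} {c : Context Q σ} :
    Pending push L R c.swap ↔ Pending push R L c := or_comm

variable [DecidableEq Q]

variable (push) in
/-- The contexts that become pending when a right-moving head `m` leaving behind the cell `f` is
recorded in `own`. -/
def successors (own other : Side Q σ) (m : Mover Q σ) (f : Deposit σ) : List (Context Q σ) :=
  (if m ∈ own.movers then [] else other.deposits.filterMap (meet push m)) ++
  (if f ∈ own.deposits then [] else (other.movers.filterMap (meet push · f)).map Context.swap)

theorem Pending.of_record {R L : Side Q σ} {m : Mover Q σ} {f : Deposit σ} {c : Context Q σ}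
    (h : Pending push (R.record m f) L c) :
    Pending push R L c ∨ c ∈ successors push R L m f := by
  obtain ⟨m', hm', f', hf', hmeet⟩ | ⟨m', hm', f', hf', hmeet⟩ := h
  · obtain rfl | hm' := List.mem_insert_iff.1 hm'
    · by_cases hold : m' ∈ R.movers
      · exact .inl (.inl ⟨m', hold, f', hf', hmeet⟩)
      · exact .inr (by simp only [successors, hold]; grind)
    · exact .inl (.inl ⟨m', hm', f', hf', hmeet⟩)
  · obtain rfl | hf' := List.mem_insert_iff.1 hf'
    · by_cases hold : f' ∈ R.deposits
      · exact .inl (.inr ⟨m', hm', f', hold, hmeet⟩)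
      · have : c = c.swap.swap := rfl
        exact .inr (by simp only [successors, hold]; grind)
    · exact .inl (.inr ⟨m', hm', f', hf', hmeet⟩)

variable (push) in
/-- The search for a finite set of recorded moves, containing those in `R` and `L`, that accounts
for the contexts in `todo` and all contexts that can arise from them. It fails if it runs out of
fuel or meets a context in which `T` does not move the head. -/
def explore (T : Machine Q) : ℕ → Side Q σ → Side Q σ → List (Context Q σ) → Bool
  | 0, _, _, _ => false
  | _ + 1, _, _, [] => true
  | n + 1, R, L, ⟨q, s, x, y⟩ :: todo =>
    match T (q, s) with
    | some (q', w, .right) =>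
      let m := ⟨y, push x w, q'⟩
      let f := ⟨x, w⟩
      explore T n (R.record m f) L (successors push R L m f ++ todo)
    | some (q', w, .left) =>
      let m := ⟨x, push y w, q'⟩
      let f := ⟨y, w⟩
      explore T n R (L.record m f) ((successors push L R m f).map Context.swap ++ todo)
    | _ => false

theorem exists_covered_of_explore {T : Machine Q} {n : ℕ} {R L : Side Q σ}
    {todo : List (Context Q σ)} (h : explore push T n R L todo = true)
    (hpending : ∀ c, Pending push R L c → Covered push T R L c ∨ c ∈ todo) :
    ∃ R' ≥ R, ∃ L' ≥ L, (∀ c ∈ todo, Covered push T R' L' c) ∧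
      ∀ c, Pending push R' L' c → Covered push T R' L' c := by
  induction n generalizing R L todo with
  | zero => simp [explore] at h
  | succ n ih =>
    match todo with
    | [] => exact ⟨R, le_rfl, L, le_rfl, by simp, by simpa using hpending⟩
    | ⟨q, s, x, y⟩ :: todo =>
      have after_move {R₁ L₁ : Side Q σ} {new : List (Context Q σ)} (hR₁ : R ≤ R₁) (hL₁ : L ≤ L₁)
          (hhead : Covered push T R₁ L₁ ⟨q, s, x, y⟩)
          (hnew : ∀ c, Pending push R₁ L₁ c → Pending push R L c ∨ c ∈ new)
          (h : explore push T n R₁ L₁ (new ++ todo) = true) :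
          ∃ R' ≥ R, ∃ L' ≥ L, (∀ c ∈ ⟨q, s, x, y⟩ :: todo, Covered push T R' L' c) ∧
            ∀ c, Pending push R' L' c → Covered push T R' L' c := by
        obtain ⟨R', hR, L', hL, htodo, hclosed⟩ := ih h fun c hc => by
          grind [Covered.mono]
        exact ⟨R', hR₁.trans hR, L', hL₁.trans hL, by grind [Covered.mono], hclosed⟩
      simp only [explore] at h
      split at h
      next q' w hT =>
        exact after_move (R.le_record _ _) le_rfl
          ⟨q', w, .inl ⟨hT, List.mem_insert_self, List.mem_insert_self⟩⟩
          (fun c hc => hc.of_record) h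
      next q' w hT =>
        refine after_move le_rfl (L.le_record _ _)
          ⟨q', w, .inr ⟨hT, List.mem_insert_self, List.mem_insert_self⟩⟩ (fun c hc => ?_) h
        obtain hc | hc := (pending_swap.2 hc).of_record
        · exact .inl (pending_swap.1 hc)
        · exact .inr (List.mem_map.2 ⟨_, hc, rfl⟩)
      next => simp at h

end Explore

section Soundness

variable {push : σ → Bool → σ} {blank : σ}

/-- The abstraction of a half tape, listed outward from the head: the fold of `push` over its cells
from the far end. -/
def ofHalfTape (push : σ → Bool → σ) (blank : σ) (l : List Bool) : σ :=
  l.foldr (fun b x => push x b) blank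

/-- Every cell of the half tape, including the first one beyond its end, is recorded in `D`. -/
def Supported (push : σ → Bool → σ) (blank : σ) (D : List (Deposit σ)) : List Bool → Prop
  | [] => ⟨blank, false⟩ ∈ D
  | b :: l => ⟨ofHalfTape push blank l, b⟩ ∈ D ∧ Supported push blank D l

theorem Supported.tail {D : List (Deposit σ)} {l : List Bool} (h : Supported push blank D l) :
    Supported push blank D l.tail := by
  cases l with
  | nil => exact h
  | cons b l => exact h.2

theorem Supported.mem {D : List (Deposit σ)} {l : List Bool} (h : Supported push blank D l) :
    ⟨ofHalfTape push blank l.tail, l.headD false⟩ ∈ D := by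
  cases l with
  | nil => exact h
  | cons b l => exact h.1

variable (push blank) in
/-- The abstraction of a configuration. -/
def context (c : ListCfg Q) : Context Q σ :=
  ⟨c.state, c.symbol, ofHalfTape push blank c.left, ofHalfTape push blank c.right⟩

theorem push_ofHalfTape_tail (hblank : push blank false = blank) (l : List Bool) :
    push (ofHalfTape push blank l.tail) (l.headD false) = ofHalfTape push blank l := by
  cases l with
  | nil => exact hblank
  | cons b l => rfl

variable (push blank) in
/-- The invariant maintained along a computation: the next move is recorded, and so is every cell of
the tape off the head, as left behind by a move away from it. -/
structure Tracked (T : Machine Q) (R L : Side Q σ) (c : ListCfg Q) : Prop where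
  covered : Covered push T R L (context push blank c)
  left : Supported push blank R.deposits c.left
  right : Supported push blank L.deposits c.right

theorem Tracked.exists_apply [DecidableEq σ] (hblank : push blank false = blank) {T : Machine Q}
    {R L : Side Q σ} (hclosed : ∀ c, Pending push R L c → Covered push T R L c) {c : ListCfg Q}
    (h : Tracked push blank T R L c) :
    ∃ e ∈ T c.scanned, Tracked push blank T R L (c.apply e) := by
  obtain ⟨⟨q, w, ⟨hT, hm, hf⟩ | ⟨hT, hm, hf⟩⟩, hleft, hright⟩ := h
  · refine ⟨_, hT, hclosed _ (.inl ⟨_, hm, _, hright.mem, ?_⟩), ⟨hf, hleft⟩, hright.tail⟩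
    exact if_pos (push_ofHalfTape_tail hblank _)
  · refine ⟨_, hT, hclosed _ (.inr ⟨_, hm, _, hleft.mem, ?_⟩), hleft.tail, ⟨hf, hright⟩⟩
    exact if_pos (push_ofHalfTape_tail hblank _)

variable [DecidableEq Q] [DecidableEq σ]

/-- A sufficient condition for all machines extending `T` to run forever from the blank tape. The
blank cells count as left behind in both directions. -/
def neverHalts (push : σ → Bool → σ) (blank : σ) (q₀ : Q) (T : Machine Q) : Bool :=
  explore push T 2000 ⟨[], [⟨blank, false⟩]⟩ ⟨[], [⟨blank, false⟩]⟩ [⟨q₀, false, blank, blank⟩]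

theorem not_haltsWith_of_neverHalts (hblank : push blank false = blank) {q₀ : Q} {T M : Machine Q}
    (h : neverHalts push blank q₀ T = true) (hTM : Extends T M) (k n : ℕ) :
    ¬HaltsWith M k n (start q₀) := by
  obtain ⟨R, hR, L, hL, hstart, hclosed⟩ := exists_covered_of_explore h (by simp [Pending])
  have tracked_start : Tracked push blank T R L (start q₀) :=
    ⟨hstart _ List.mem_cons_self, hR.2 List.mem_cons_self, hL.2 List.mem_cons_self⟩
  refine not_haltsWith_of_invariant (fun c hc => ?_) tracked_start k n
  obtain ⟨e, he, hc⟩ := hc.exists_apply hblank hclosed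
  exact ⟨e, hTM _ e he, hc⟩

end Soundness

end Abstraction

section Search

/-- The machine `T` with its entry at `p` set to `e`. This is `Function.update T p (some e)`,
phrased for fast evaluation. -/
def Machine.define [DecidableEq Q] (T : Machine Q) (p : Q × Bool) (e : Q × Bool × Dir) :
    Machine Q :=
  fun x => if x.2 = p.2 then if x.1 = p.1 then some e else T x else T x

theorem Extends.define [DecidableEq Q] {T M : Machine Q} (h : Extends T M) {p : Q × Bool}
    {e : Q × Bool × Dir} (he : M p = some e) : Extends (T.define p e) M := by
  intro x
  unfold Machine.define
  split_ifs with hsymbol hstate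
  · obtain rfl : x = p := Prod.ext hstate hsymbol
    simp [he]
  · exact h x
  · exact h x

/-- Started in state `q₀` on the blank tape, the machine `M` makes a stay move only as its last
step. -/
def StaysOnlyToHalt (M : Machine Q) (q₀ : Q) : Prop :=
  ∀ c, Reaches M (start q₀) c → ∀ p, M c.scanned = some (p.1, p.2, .stay) → M p = none

theorem HaltsWith.exists_move {M : Machine Q} {q₀ : Q} (hstay : StaysOnlyToHalt M q₀) {k n : ℕ}
    {c : ListCfg Q} (h : HaltsWith M k n c) (hreach : Reaches M (start q₀) c)
    (hones : c.left.count true + c.right.count true + 1 < k) :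
    ∃ q w, ∃ d ∈ [Dir.left, .right], M c.scanned = some (q, w, d) := by
  cases he : M c.scanned with
  | none =>
    have eq := h.ones_eq he
    have := c.symbol.toNat_le
    simp only [ones] at eq
    omega
  | some e =>
    obtain ⟨q, w, _ | _ | _⟩ := e
    · simp
    · obtain ⟨m, -, h⟩ := h.exists_lt_apply he
      have eq := h.ones_eq (hstay c hreach (q, w) he)
      have := w.toNat_le
      simp only [ones, apply] at eq
      omega
    · simp

theorem not_haltsWith_of_forall_ne_none {M : Machine Q} (h : ∀ p, M p ≠ none) (k n : ℕ)
    (c : ListCfg Q) : ¬HaltsWith M k n c :=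
  not_haltsWith_of_invariant (Inv := fun _ => True)
    (fun c _ => by simpa using Option.ne_none_iff_exists'.1 (h c.scanned)) trivial k n

theorem Extends.eq_of_haltsWith {T M : Machine Q} (h : Extends T M) {p : Q × Bool}
    (hp : ∀ p', T p' = none → p' = p) {k n : ℕ} {c : ListCfg Q} (hM : HaltsWith M k n c) :
    T = M := by
  obtain ⟨p', hp'⟩ : ∃ p', M p' = none := by
    by_contra! htotal
    exact not_haltsWith_of_forall_ne_none htotal k n c hM
  have none_of_none (x : Q × Bool) (hx : M x = none) : T x = none :=
    Option.eq_none_iff_forall_not_mem.2 fun e he => by simpa [hx] using h x e he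
  ext1 x
  cases hx : T x with
  | none => rw [hp x hx, ← hp p' (none_of_none p' hp'), hp']
  | some e => exact (h x e hx).symm

variable [Fintype Q] [DecidableEq Q]

/-- The enumeration of the machines that extend `T` and halt with `k` ones when continuing from the
configuration `c`. An entry needed for the first time is set in all possible ways to a move to the
left or right. The result is `true` if all machines found are among `winners` and `neverHalts`
succeeds on all partial machines still running after the given number of steps. -/
def search (neverHalts : Machine Q → Bool) (k : ℕ) (winners : List (Machine Q)) :
    ℕ → Machine Q → ListCfg Q → Bool
  | 0, T, _ => neverHalts T
  | n + 1, T, c =>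
    match T c.scanned with
    | some e => search neverHalts k winners n T (c.apply e)
    | none =>
      if ∀ p, T p = none → p = c.scanned then decide (c.ones = k → T ∈ winners)
      else decide (c.left.count true + c.right.count true + 1 < k) &&
        decide (∀ q, ∀ w, ∀ d ∈ [Dir.left, .right],
          search neverHalts k winners n (T.define c.scanned (q, w, d)) (c.apply (q, w, d)) = true)

theorem mem_of_search {neverHalts : Machine Q → Bool} {q₀ : Q} {k : ℕ}
    {winners : List (Machine Q)} {M : Machine Q}
    (hneverHalts : ∀ T, neverHalts T = true → Extends T M → ∀ n, ¬HaltsWith M k n (start q₀))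
    (hstay : StaysOnlyToHalt M q₀)
    {fuel : ℕ} {T : Machine Q} {c : ListCfg Q} (h : search neverHalts k winners fuel T c = true)
    (hTM : Extends T M) (hreach : Reaches M (start q₀) c) {n : ℕ} (hM : HaltsWith M k n c) :
    M ∈ winners := by
  induction fuel generalizing T c n with
  | zero =>
    obtain ⟨m, hm⟩ := hM.exists_of_reaches hreach
    exact (hneverHalts T h hTM m hm).elim
  | succ fuel ih =>
    have after_step {T' : Machine Q} {e : Q × Bool × Dir} (he : M c.scanned = some e)
        (hT' : Extends T' M) (h : search neverHalts k winners fuel T' (c.apply e) = true) :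
        M ∈ winners := by
      obtain ⟨m, -, hM⟩ := hM.exists_lt_apply he
      exact ih h hT' (hreach.tail ⟨e, he, rfl⟩) hM
    rw [search] at h
    split at h
    next e he => exact after_step (hTM _ e he) hTM h
    next hnone =>
      split_ifs at h with hfull
      · obtain rfl := hTM.eq_of_haltsWith hfull hM
        exact of_decide_eq_true h (hM.ones_eq hnone)
      · simp only [Bool.and_eq_true, decide_eq_true_eq] at h
        obtain ⟨q, w, d, hd, he⟩ := hM.exists_move hstay hreach h.1
        exact after_step he (hTM.define he) (h.2 q w d hd)

end Search

section Champions

/-- The machine whose entries at state `i` are `t i 0` and `t i 1`. -/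
def Machine.ofTable (t : Fin 3 → Fin 2 → Option (Fin 3 × Bool × Dir)) : Machine (Fin 3) :=
  fun p => t p.1 (if p.2 then 1 else 0)

/-- The machines that halt with six ones, up to interchanging left and right and interchanging the
states `1` and `2`. They were found by exhaustive search. -/
def representatives : List (Machine (Fin 3)) :=
  let l₀ (q : Fin 3) : Option (Fin 3 × Bool × Dir) := some (q, false, .left)
  let l₁ (q : Fin 3) : Option (Fin 3 × Bool × Dir) := some (q, true, .left)
  let s₀ (q : Fin 3) : Option (Fin 3 × Bool × Dir) := some (q, false, .stay)
  let s₁ (q : Fin 3) : Option (Fin 3 × Bool × Dir) := some (q, true, .stay)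
  let r₀ (q : Fin 3) : Option (Fin 3 × Bool × Dir) := some (q, false, .right)
  let r₁ (q : Fin 3) : Option (Fin 3 × Bool × Dir) := some (q, true, .right)
  [.ofTable ![![r₁ 1, l₁ 2], ![l₁ 0, s₀ 0], ![l₁ 1, none]],
    .ofTable ![![r₁ 1, l₁ 2], ![l₁ 0, r₁ 1], ![l₁ 1, none]],
    .ofTable ![![r₁ 1, none], ![r₀ 2, s₀ 0], ![l₁ 2, l₁ 0]],
    .ofTable ![![r₁ 1, none], ![r₀ 2, r₁ 1], ![l₁ 2, l₁ 0]],
    .ofTable ![![r₁ 1, r₁ 2], ![l₁ 2, none], ![r₁ 0, l₀ 1]],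
    .ofTable ![![r₁ 1, r₁ 0], ![l₁ 2, none], ![s₁ 0, l₁ 1]],
    .ofTable ![![r₁ 1, r₁ 0], ![l₁ 2, none], ![r₁ 0, l₁ 1]],
    .ofTable ![![r₁ 1, s₀ 2], ![l₁ 2, none], ![r₁ 0, l₁ 1]],
    .ofTable ![![r₁ 1, l₁ 2], ![r₁ 2, none], ![l₁ 0, l₀ 1]],
    .ofTable ![![s₁ 1, r₁ 2], ![r₁ 0, l₁ 1], ![r₁ 1, none]],
    .ofTable ![![s₁ 1, none], ![l₀ 2, l₁ 1], ![r₁ 2, r₁ 0]]]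

/-- The machines obtained from `representatives` by interchanging left and right and interchanging
the states `1` and `2`. -/
def champions : List (Machine (Fin 3)) :=
  representatives.flatMap fun M =>
    [M, M.mirror, M.relabel (Equiv.swap 1 2), M.mirror.relabel (Equiv.swap 1 2)]

theorem nodup_champions : champions.Nodup := by decide +kernel

theorem length_champions : champions.length = 44 := rfl

theorem mirror_mem_champions : ∀ M ∈ champions, M.mirror ∈ champions := by decide +kernel

theorem relabel_mem_champions :
    ∀ M ∈ champions, M.relabel (Equiv.swap 1 2) ∈ champions := by decide +kernel

theorem update_mem_champions : ∀ M ∈ champions, ∀ p p', p ≠ p' → M p ≠ none → M p = M p' →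
    Function.update M p (some (p'.1, p'.2, .stay)) ∈ champions := by decide +kernel

theorem representatives_haltsWith :
    ∀ M ∈ representatives, ∃ n < 23, HaltsWith M 6 n (start 0) := by decide +kernel

theorem exists_haltsWith_of_mem_champions {M : Machine (Fin 3)} (hM : M ∈ champions) :
    ∃ n, HaltsWith M 6 n (start 0) := by
  obtain ⟨M₀, hM₀, hM⟩ := List.mem_flatMap.1 hM
  obtain ⟨n, -, h⟩ := representatives_haltsWith M₀ hM₀
  simp only [List.mem_cons, List.not_mem_nil, or_false] at hM
  obtain rfl | rfl | rfl | rfl := hM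
  exacts [⟨n, h⟩, ⟨n, h.mirror⟩, ⟨n, h.relabel (Equiv.swap 1 2)⟩,
    ⟨n, h.mirror.relabel (Equiv.swap 1 2)⟩]

end Champions

section Classification

/-- The abstraction of half tapes used on three-state machines. A half tape is read as a binary
number whose last digit is the cell next to the head; when it outgrows `k` digits, the digits
before the last `j` are replaced by a single `1`. -/
def pushDigit (k j x : ℕ) (b : Bool) : ℕ :=
  let u := 2 * x + b.toNat
  if u < 2 ^ k then u else 2 ^ j + u % 2 ^ j

/-- The sufficient condition for not halting used on three-state machines. The cheap abstraction
that only distinguishes blank half tapes and the two values of the first cell of the others settles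
most cases. -/
def neverHalts₃ (T : Machine (Fin 3)) : Bool :=
  Abstraction.neverHalts (pushDigit 0 1) 0 0 T || Abstraction.neverHalts (pushDigit 5 3) 0 0 T

theorem not_haltsWith_of_neverHalts₃ {T M : Machine (Fin 3)} (h : neverHalts₃ T = true)
    (hTM : Extends T M) (k n : ℕ) : ¬HaltsWith M k n (start 0) := by
  have hblank (i j : ℕ) : pushDigit i j 0 false = 0 := by simp [pushDigit]
  obtain h | h := (Bool.or_eq_true _ _).mp h
  · exact Abstraction.not_haltsWith_of_neverHalts (hblank 0 1) h hTM k n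
  · exact Abstraction.not_haltsWith_of_neverHalts (hblank 5 3) h hTM k n

set_option maxRecDepth 100000 in
theorem search_champions : ∀ q ≠ (2 : Fin 3), ∀ w,
    search neverHalts₃ 6 champions 20 (Machine.define (fun _ => none) (0, false) (q, w, .right))
      ((start 0).apply (q, w, .right)) = true := by
  decide +kernel

variable {n : ℕ} {M : Machine (Fin 3)}

theorem mem_champions_of_not_staysOnlyToHalt
    (ih : ∀ m < n, ∀ M, HaltsWith M 6 m (start 0) → M ∈ champions)
    (hstay : ¬StaysOnlyToHalt M 0) (h : HaltsWith M 6 n (start 0)) : M ∈ champions := by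
  simp only [StaysOnlyToHalt, not_forall] at hstay
  obtain ⟨c, hreach, p', hp, hne⟩ := hstay
  obtain ⟨e, hp'⟩ := Option.ne_none_iff_exists'.1 hne
  obtain ⟨m, hmn, hm⟩ := h.exists_lt_update hp hp' hreach rfl
  have hmem := ih m hmn _ hm
  obtain heq | hne := eq_or_ne c.scanned p'
  · rwa [← hp', ← heq, Function.update_eq_self] at hmem
  · have := update_mem_champions _ hmem c.scanned p' hne (by simp) (by simp [hne.symm, hp'])
    rwa [Function.update_idem, ← hp, Function.update_eq_self] at this

theorem mem_champions_of_right_of_ne_two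
    (ih : ∀ m < n, ∀ M, HaltsWith M 6 m (start 0) → M ∈ champions) {q : Fin 3} {w : Bool}
    (hq : q ≠ 2) (he : M (0, false) = some (q, w, .right)) (h : HaltsWith M 6 n (start 0)) :
    M ∈ champions := by
  by_cases hstay : StaysOnlyToHalt M 0
  · obtain ⟨m, -, hm⟩ := h.exists_lt_apply he
    have hTM : Extends (fun _ => none) M := by simp [Extends]
    exact mem_of_search (fun T hT hTM n => not_haltsWith_of_neverHalts₃ hT hTM 6 n) hstay
      (search_champions q hq w) (hTM.define he) (.single ⟨_, he, rfl⟩) hm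
  · exact mem_champions_of_not_staysOnlyToHalt ih hstay h

theorem mem_champions_of_right (ih : ∀ m < n, ∀ M, HaltsWith M 6 m (start 0) → M ∈ champions)
    {q : Fin 3} {w : Bool} (he : M (0, false) = some (q, w, .right))
    (h : HaltsWith M 6 n (start 0)) : M ∈ champions := by
  obtain rfl | hq := eq_or_ne q 2
  · have he' : M.relabel (Equiv.swap 1 2) (0, false) = some (1, w, .right) := by
      have : Equiv.swap (1 : Fin 3) 2 0 = 0 := rfl
      simp [Machine.relabel, this, he]
    rw [← M.relabel_symm_relabel (Equiv.swap 1 2), Equiv.symm_swap]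
    exact relabel_mem_champions _ <|
      mem_champions_of_right_of_ne_two ih (by decide) he' (h.relabel (Equiv.swap 1 2))
  · exact mem_champions_of_right_of_ne_two ih hq he h

theorem mem_champions_of_haltsWith (M : Machine (Fin 3)) (h : HaltsWith M 6 n (start 0)) :
    M ∈ champions := by
  induction n using Nat.strong_induction_on generalizing M with | _ n ih
  by_cases hstay : StaysOnlyToHalt M 0
  · obtain ⟨q, w, d, hd, he : M (0, false) = _⟩ := h.exists_move hstay .refl (by decide)
    obtain rfl | rfl : d = .left ∨ d = .right := by simpa using hd
    · have he' : M.mirror (0, false) = some (q, w, .right) := by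
        simp [Machine.mirror, he, Dir.flip]
      rw [← M.mirror_mirror]
      exact mirror_mem_champions _ (mem_champions_of_right ih he' h.mirror)
    · exact mem_champions_of_right ih he h
  · exact mem_champions_of_not_staysOnlyToHalt ih hstay h

end Classification

/-- Card(M_BB(3)) = 44: there are exactly 44 Turing machines
with at most 3 states (identified with their transition functions on the
state set Fin 3) that halt on the all-zero tape with a computed word
containing exactly BB(3) = 6 ones. -/
theorem card_busy_beaver_machines_3 :
    {f : Fin 3 × Bool → Option (Fin 3 × Bool × Dir) |
        ∃ (w : List Bool) (t : ℕ), Computes f 0 w t ∧ w.count true = 6}.ncard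
      = 44 := by
  have classification (M : Machine (Fin 3)) :
      (∃ w t, Computes M 0 w t ∧ w.count true = 6) ↔ M ∈ champions.toFinset := by
    rw [exists_computes_iff_exists_haltsWith, List.mem_toFinset]
    exact ⟨fun ⟨_, h⟩ => mem_champions_of_haltsWith M h, exists_haltsWith_of_mem_champions⟩
  simp only [classification, SetLike.setOfPred_mem_eq]
  rw [Set.ncard_coe_finset, List.toFinset_card_of_nodup nodup_champions,
    length_champions]
end
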